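/- Let (H, x, Y) be an sl2-triple in a finite-dimensional Lie algebra g over a field k of characteristic zero, and let B : g → g → k be a nondegenerate symmetric invariant bilinear form on g (invariance: B(⁅z, a⁆, b) + B(a, ⁅z, b⁆) = 0 for all z, a, b ∈ g). Then for every integer i the restriction of B gives a nondegenerate pairing between g_i and g_{-i}: for every nonzero a ∈ g_i there exists b ∈ g_{-i} with B(a, b) ≠ 0. -/

import Mathlib

/-- The `i`-eigenspace of `ad H` on a Lie algebra `g`:
`g_i = {z ∈ g | ⁅H, z⁆ = (i : k) • z}`. -/
def gwt (k : Type*) [Field k] {g : Type*} [LieRing g] [LieAlgebra k g]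
    (H : g) (i : ℤ) : Submodule k g where
  carrier := {z | ⁅H, z⁆ = (i : k) • z}
  add_mem' := by
    intro a b ha hb
    simp only [Set.mem_setOf_eq] at *
    rw [lie_add, ha, hb, smul_add]
  zero_mem' := by simp
  smul_mem' := by
    intro c a ha
    simp only [Set.mem_setOf_eq] at *
    rw [lie_smul, ha]
    exact smul_comm c ((i : k)) a

/-! Invariance makes `ad H - i` and `ad H + i` skew-adjoint for `B`, so the vectors orthogonal to
`g_{-i}` are exactly the image of `ad H - i`. The claim is therefore that `ad H` has no nontrivial
Jordan block for the eigenvalue `i`: no nonzero `a` in `ker (ad H - i)` lies in the image of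
`ad H - i`. This holds for the action `h, e, f` of any `sl₂`-triple on a finite-dimensional module.

Both `e` and `f` are nilpotent. If `f ^ n = 0`, expanding `e ^ n * f ^ n` shows that the squarefree
polynomial `h (h - 1) ⋯ (h - n + 1)` in `h` vanishes on `ker e` and maps into `range f`. The first
property forces the eigenvalues of `h` on `ker e` to be natural numbers, whence
`ker e ∩ range f = 0`; the second puts any `a ∈ ker (h - μ) ∩ range (h - μ)` into `range f`. If
`a ≠ 0`, the last nonzero `e ^ j a` has the same property for `μ + 2 j`, so it lies in
`ker e ∩ range f`, a contradiction. -/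

open Polynomial LieModule

theorem exists_mem_ker_apply_ne_zero_of_disjoint {k M N : Type*} [Field k] [AddCommGroup M]
    [Module k M] [FiniteDimensional k M] [AddCommGroup N] [Module k N] {B : M →ₗ[k] N →ₗ[k] k}
    (hB : B.Nondegenerate) {T : Module.End k M} {T' : Module.End k N}
    (hBT : ∀ m n, B (T m) n + B m (T' n) = 0)
    (hT : Disjoint (LinearMap.ker T) (LinearMap.range T)) {a : M} (ha : a ∈ LinearMap.ker T)
    (ha0 : a ≠ 0) : ∃ b ∈ LinearMap.ker T', B a b ≠ 0 := by
  have not_mem : a ∉ LinearMap.range T := fun h ↦ ha0 (Submodule.disjoint_def.mp hT a ha h)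
  obtain ⟨φ, hφa, hφ⟩ := Submodule.exists_le_ker_of_notMem not_mem
  have surjective : Function.Surjective B.flip :=
    LinearMap.flip_surjective_iff₁.mpr
      (LinearMap.ker_eq_bot.mp (LinearMap.separatingLeft_iff_ker_eq_bot.mp hB.1))
  obtain ⟨b, rfl⟩ := surjective φ
  refine ⟨b, hB.2 _ fun m ↦ ?_, hφa⟩
  have apply_T : B (T m) b = 0 := hφ (LinearMap.mem_range_self T m)
  simpa only [apply_T, zero_add] using hBT m b

section Sl2

attribute [local instance] LieRing.ofAssociativeRing

theorem lie_mul_eq_lie_mul_add_mul_lie {A : Type*} [Ring A] (x y z : A) :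
    ⁅x, y * z⁆ = ⁅x, y⁆ * z + y * ⁅x, z⁆ := by
  simp only [Ring.lie_def]
  noncomm_ring

section Algebra

variable {R A : Type*} [CommRing R] [Ring A] [Algebra R A] {h e f : A}

theorem lie_pow_of_lie_eq_smul {c : R} (hhe : ⁅h, e⁆ = c • e) (n : ℕ) :
    ⁅h, e ^ n⁆ = ((n : R) * c) • e ^ n := by
  induction n with
  | zero => simp [Ring.lie_def]
  | succ n ih =>
    rw [pow_succ, lie_mul_eq_lie_mul_add_mul_lie, ih, hhe, smul_mul_assoc, mul_smul_comm,
      ← add_smul]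
    push_cast
    ring_nf

theorem pow_succ_mul_of_sl2 (hhe : ⁅h, e⁆ = (2 : R) • e) (hef : ⁅e, f⁆ = h) (n : ℕ) :
    e ^ (n + 1) * f = f * e ^ (n + 1) + ((n : R) + 1) • ((h - algebraMap R A n) * e ^ n) := by
  have e_mul_f : e * f = f * e + h := by rw [← hef, Ring.lie_def]; abel
  have e_mul_h : e * h = h * e - (2 : R) • e := by rw [← hhe, Ring.lie_def]; abel
  induction n with
  | zero => simpa using e_mul_f
  | succ n ih =>
    calc e ^ (n + 1 + 1) * f
        = e * f * e ^ (n + 1) + ((n : R) + 1) • ((e * h - (n : R) • e) * e ^ n) := by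
          rw [pow_succ' e (n + 1), mul_assoc, ih]
          simp only [Algebra.algebraMap_eq_smul_one, mul_add, mul_sub, sub_mul, mul_smul_comm,
            smul_mul_assoc, one_mul, mul_assoc]
      _ = f * e ^ (n + 1 + 1) +
            (((n + 1 : ℕ) : R) + 1) • ((h - algebraMap R A (n + 1 : ℕ)) * e ^ (n + 1)) := by
          rw [e_mul_f, e_mul_h]
          simp only [Algebra.algebraMap_eq_smul_one, add_mul, sub_mul, smul_mul_assoc, one_mul,
            mul_assoc, pow_succ']
          push_cast
          module

theorem pow_succ_mul_pow_succ_of_sl2 (hhe : ⁅h, e⁆ = (2 : R) • e) (hef : ⁅e, f⁆ = h) (n : ℕ) :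
    e ^ (n + 1) * f ^ (n + 1) =
      (f * e + ((n : R) + 1) • (h - algebraMap R A n)) * (e ^ n * f ^ n) := by
  rw [pow_succ' f, ← mul_assoc, pow_succ_mul_of_sl2 hhe hef]
  simp only [add_mul, smul_mul_assoc, mul_assoc, pow_succ']

theorem commute_mul_sub_algebraMap_of_sl2 (hhe : ⁅h, e⁆ = (2 : R) • e)
    (hhf : ⁅h, f⁆ = (-2 : R) • f) (r : R) : Commute (f * e) (h - algebraMap R A r) := by
  refine Commute.sub_right (Commute.symm ?_) (Algebra.commute_algebraMap_right r _)
  rw [commute_iff_lie_eq, lie_mul_eq_lie_mul_add_mul_lie, hhf, hhe, smul_mul_assoc, mul_smul_comm]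
  module

theorem commute_mul_pow_mul_pow_of_sl2 (hhe : ⁅h, e⁆ = (2 : R) • e)
    (hhf : ⁅h, f⁆ = (-2 : R) • f) (hef : ⁅e, f⁆ = h) (n : ℕ) :
    Commute (f * e) (e ^ n * f ^ n) := by
  induction n with
  | zero => simp
  | succ n ih =>
    rw [pow_succ_mul_pow_succ_of_sl2 hhe hef]
    exact ((Commute.refl _).add_right
      ((commute_mul_sub_algebraMap_of_sl2 hhe hhf _).smul_right _)).mul_right ih

theorem exists_pow_mul_pow_eq_of_sl2 (hhe : ⁅h, e⁆ = (2 : R) • e)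
    (hhf : ⁅h, f⁆ = (-2 : R) • f) (hef : ⁅e, f⁆ = h) (n : ℕ) :
    ∃ y, Commute (f * e) y ∧
      e ^ n * f ^ n = (n.factorial : R) • aeval h (descPochhammer R n) + f * e * y := by
  induction n with
  | zero => exact ⟨0, Commute.zero_right _, by simp⟩
  | succ n ih =>
    obtain ⟨y, hy, ih⟩ := ih
    set g := h - algebraMap R A n with hg
    have commute_g : Commute (f * e) g := commute_mul_sub_algebraMap_of_sl2 hhe hhf n
    have aeval_succ :
        aeval h (descPochhammer R (n + 1)) = g * aeval h (descPochhammer R n) := by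
      rw [descPochhammer_succ_right, mul_comm, map_mul, hg]
      simp only [map_sub, aeval_X, map_natCast]
    refine ⟨e ^ n * f ^ n + ((n : R) + 1) • (g * y),
      (commute_mul_pow_mul_pow_of_sl2 hhe hhf hef n).add_right
        ((commute_g.mul_right hy).smul_right _), ?_⟩
    calc e ^ (n + 1) * f ^ (n + 1)
        = f * e * (e ^ n * f ^ n) + ((n : R) + 1) • (g * (e ^ n * f ^ n)) := by
          rw [pow_succ_mul_pow_succ_of_sl2 hhe hef, add_mul, smul_mul_assoc]
      _ = f * e * (e ^ n * f ^ n) + ((n : R) + 1) •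
            ((n.factorial : R) • (g * aeval h (descPochhammer R n)) + f * e * (g * y)) := by
          congr 2
          rw [ih, mul_add, mul_smul_comm, ← mul_assoc g, ← commute_g.eq, mul_assoc (f * e)]
      _ = ((n + 1).factorial : R) • aeval h (descPochhammer R (n + 1)) +
            f * e * (e ^ n * f ^ n + ((n : R) + 1) • (g * y)) := by
          rw [aeval_succ, Nat.factorial_succ, mul_add (f * e), mul_smul_comm]
          push_cast
          module

end Algebra

theorem isNilpotent_of_lie_eq_smul {k A : Type*} [Field k] [CharZero k] [Ring A] [Algebra k A]
    [FiniteDimensional k A] {h e : A} {c : k} (hc : c ≠ 0) (hhe : ⁅h, e⁆ = c • e) :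
    IsNilpotent e := by
  by_contra hne
  have eigenvalue (n : ℕ) : (LieAlgebra.ad k A h).HasEigenvalue (n * c) :=
    Module.End.hasEigenvalue_of_hasEigenvector
      ⟨Module.End.mem_eigenspace_iff.mpr (lie_pow_of_lie_eq_smul hhe n), fun h0 ↦ hne ⟨n, h0⟩⟩
  have injective : Function.Injective fun n : ℕ ↦ (n : k) * c :=
    (mul_left_injective₀ hc).comp Nat.cast_injective
  exact Set.infinite_range_of_injective injective
    ((Module.End.finite_hasEigenvalue _).subset (Set.range_subset_iff.mpr eigenvalue))

theorem squarefree_descPochhammer (k : Type*) [Field k] [CharZero k] (n : ℕ) :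
    Squarefree (descPochhammer k n) := by
  have prod_eq : descPochhammer k n = ∏ j ∈ Finset.range n, (X - C (j : k)) := by
    induction n with
    | zero => simp
    | succ n ih => rw [descPochhammer_succ_right, Finset.prod_range_succ, ih, map_natCast]
  rw [prod_eq]
  exact (separable_prod_X_sub_C_iff'.mpr fun _ _ _ _ hij ↦ Nat.cast_injective hij).squarefree

section Field

variable {k V : Type*} [Field k] [AddCommGroup V] [Module k V]

theorem ker_aeval_inf_range_aeval_le_range_aeval_of_squarefree (T : Module.End k V) {p : k[X]}
    (hp : Squarefree p) (q : k[X]) :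
    LinearMap.ker (aeval T q) ⊓ LinearMap.range (aeval T q) ≤ LinearMap.range (aeval T p) := by
  classical
  have gcd_dvd : EuclideanDomain.gcd p (q ^ 2) ∣ q :=
    ((hp.squarefree_of_dvd (EuclideanDomain.gcd_dvd_left _ _)).dvd_pow_iff_dvd two_ne_zero).mp
      (EuclideanDomain.gcd_dvd_right _ _)
  obtain ⟨r, hr⟩ := gcd_dvd
  rw [EuclideanDomain.gcd_eq_gcd_ab] at hr
  rintro _ ⟨hker, c, rfl⟩
  set u := EuclideanDomain.gcdA p (q ^ 2)
  set v := EuclideanDomain.gcdB p (q ^ 2)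
  have bezout : q = p * (u * r) + v * r * (q * q) := by linear_combination hr
  refine ⟨aeval T (u * r) c, ?_⟩
  have hker' : aeval T q (aeval T q c) = 0 := hker
  conv_rhs => rw [bezout]
  simp only [map_add, map_mul, LinearMap.add_apply, Module.End.mul_apply, hker', map_zero,
    add_zero]

variable {h e f : Module.End k V}

theorem apply_apply_of_lie_eq_smul {c : k} (hhe : ⁅h, e⁆ = c • e) (v : V) :
    h (e v) = e (h v) + c • e v := by
  have := LinearMap.congr_fun hhe v
  rwa [Ring.lie_def, LinearMap.sub_apply, sub_eq_iff_eq_add'] at this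

variable [CharZero k]

theorem exists_ker_le_ker_aeval_and_range_aeval_le_range_of_sl2 (hhe : ⁅h, e⁆ = (2 : k) • e)
    (hhf : ⁅h, f⁆ = (-2 : k) • f) (hef : ⁅e, f⁆ = h) (hf : IsNilpotent f) :
    ∃ n, LinearMap.ker e ≤ LinearMap.ker (aeval h (descPochhammer k n)) ∧
      LinearMap.range (aeval h (descPochhammer k n)) ≤ LinearMap.range f := by
  obtain ⟨n, hn⟩ := hf
  obtain ⟨y, hy, heq⟩ := exists_pow_mul_pow_eq_of_sl2 hhe hhf hef n
  have factorial_ne_zero : (n.factorial : k) ≠ 0 := Nat.cast_ne_zero.mpr n.factorial_ne_zero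
  have key : aeval h (descPochhammer k n) = (-(n.factorial : k)⁻¹) • (f * e * y) := by
    rw [hn, mul_zero, eq_comm, add_comm] at heq
    rw [eq_neg_of_add_eq_zero_left heq, smul_neg, neg_smul, neg_neg,
      inv_smul_smul₀ factorial_ne_zero]
  -- `f * e * y` has range in `range f`, and its other form `y * (f * e)` vanishes on `ker e`.
  refine ⟨n, fun v hv ↦ ?_, ?_⟩
  · rw [LinearMap.mem_ker] at hv ⊢
    rw [key, hy.eq]
    simp only [LinearMap.smul_apply, Module.End.mul_apply, hv, map_zero, smul_zero]
  · rintro _ ⟨v, rfl⟩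
    rw [key, mul_assoc, ← mul_smul_comm]
    exact LinearMap.mem_range_self f _

theorem exists_nat_eq_of_hasEigenvector_of_sl2 (hhe : ⁅h, e⁆ = (2 : k) • e)
    (hhf : ⁅h, f⁆ = (-2 : k) • f) (hef : ⁅e, f⁆ = h) (hf : IsNilpotent f) {μ : k} {v : V}
    (hv : h.HasEigenvector μ v) (hev : e v = 0) : ∃ m : ℕ, μ = m := by
  obtain ⟨n, hker, -⟩ := exists_ker_le_ker_aeval_and_range_aeval_le_range_of_sl2 hhe hhf hef hf
  have eval_smul : (descPochhammer k n).eval μ • v = 0 := by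
    rw [← Module.End.aeval_apply_of_hasEigenvector hv]
    exact hker hev
  have eval_eq_zero := (smul_eq_zero_iff_left hv.2).mp eval_smul
  rw [descPochhammer_eval_eq_prod_range, Finset.prod_eq_zero_iff] at eval_eq_zero
  obtain ⟨m, -, hm⟩ := eval_eq_zero
  exact ⟨m, sub_eq_zero.mp hm⟩

theorem pow_apply_add_smul_eq_zero_of_sl2 (hhe : ⁅h, e⁆ = (2 : k) • e) (hef : ⁅e, f⁆ = h) {p : ℕ}
    {w : V} (hw : (e ^ (p + 1)) w = 0) (hefw : e (f w) = 0) :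
    (e ^ p) (h w + (p : k) • w) = 0 := by
  have eigen_pow : h ((e ^ p) w) = (p : k) • (e ^ p) w := by
    have := LinearMap.congr_fun (pow_succ_mul_of_sl2 hhe hef p) w
    simp only [Module.End.mul_apply, LinearMap.add_apply, LinearMap.smul_apply,
      LinearMap.sub_apply, Module.algebraMap_end_apply, hw, map_zero, zero_add] at this
    rw [pow_succ, Module.End.mul_apply, hefw, map_zero, eq_comm,
      smul_eq_zero_iff_right (Nat.cast_add_one_ne_zero p), sub_eq_zero] at this
    exact this
  have pow_shift := apply_apply_of_lie_eq_smul (lie_pow_of_lie_eq_smul hhe p) w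
  rw [eigen_pow] at pow_shift
  rw [map_add, map_smul, ← sub_eq_of_eq_add pow_shift]
  module

theorem disjoint_ker_range_of_sl2 (hhe : ⁅h, e⁆ = (2 : k) • e) (hhf : ⁅h, f⁆ = (-2 : k) • f)
    (hef : ⁅e, f⁆ = h) (he : IsNilpotent e) (hf : IsNilpotent f) :
    Disjoint (LinearMap.ker e) (LinearMap.range f) := by
  suffices vanish : ∀ (p : ℕ) (w : V), (e ^ p) w = 0 → e (f w) = 0 → f w = 0 by
    obtain ⟨p, hp⟩ := he
    rw [Submodule.disjoint_def]
    rintro _ hker ⟨w, rfl⟩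
    exact vanish p w (by rw [hp, LinearMap.zero_apply]) hker
  intro p
  induction p with
  | zero =>
    intro w hw _
    rw [show w = 0 from hw, map_zero]
  | succ p ih =>
    intro w hw hefw
    -- As `f (h + p) = (h + p + 2) f` and `-(p + 2)` is not an eigenvalue of `h` on `ker e`, the
    -- vector `w` may be replaced by `(h + p) w`, which is already killed by `e ^ p`.
    have f_shift : f (h w + (p : k) • w) = h (f w) - (-(p + 2 : k)) • f w := by
      rw [apply_apply_of_lie_eq_smul hhf, map_add, map_smul]
      module
    have e_h_f : e (h (f w)) = 0 := by
      simpa only [hefw, map_zero, smul_zero, add_zero, eq_comm] using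
        apply_apply_of_lie_eq_smul hhe (f w)
    have f_shift_eq_zero : f (h w + (p : k) • w) = 0 :=
      ih _ (pow_apply_add_smul_eq_zero_of_sl2 hhe hef hw hefw)
        (by rw [f_shift, map_sub, map_smul, hefw, e_h_f, smul_zero, sub_zero])
    by_contra hne
    have eigenvector : h.HasEigenvector (-(p + 2 : k)) (f w) :=
      ⟨Module.End.mem_eigenspace_iff.mpr
        (sub_eq_zero.mp (f_shift.symm.trans f_shift_eq_zero)), hne⟩
    obtain ⟨m, hm⟩ := exists_nat_eq_of_hasEigenvector_of_sl2 hhe hhf hef hf eigenvector hefw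
    have : ((m + p + 2 : ℕ) : k) = 0 := by
      push_cast
      linear_combination -hm
    exact absurd (Nat.cast_eq_zero.mp this) (by omega)

theorem disjoint_ker_range_sub_algebraMap_of_sl2 (hhe : ⁅h, e⁆ = (2 : k) • e)
    (hhf : ⁅h, f⁆ = (-2 : k) • f) (hef : ⁅e, f⁆ = h) (he : IsNilpotent e) (hf : IsNilpotent f)
    (μ : k) :
    Disjoint (LinearMap.ker (h - algebraMap k (Module.End k V) μ))
      (LinearMap.range (h - algebraMap k (Module.End k V) μ)) := by
  suffices vanish : ∀ (p : ℕ) (μ : k) (a : V), (e ^ p) a = 0 →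
      a ∈ LinearMap.ker (h - algebraMap k (Module.End k V) μ) →
      a ∈ LinearMap.range (h - algebraMap k (Module.End k V) μ) → a = 0 by
    obtain ⟨p, hp⟩ := he
    exact Submodule.disjoint_def.mpr fun a ↦
      vanish p μ a (by rw [hp, LinearMap.zero_apply])
  intro p
  induction p with
  | zero => exact fun _ _ ha _ _ ↦ ha
  | succ p ih =>
    intro μ a hpow hker hrange
    have e_shift (v : V) : (h - algebraMap k (Module.End k V) (μ + 2)) (e v) =
        e ((h - algebraMap k (Module.End k V) μ) v) := by
      simp only [LinearMap.sub_apply, Module.algebraMap_end_apply, map_sub, map_smul,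
        apply_apply_of_lie_eq_smul hhe]
      module
    have ea_eq_zero : e a = 0 := by
      apply ih (μ + 2)
      · rw [← Module.End.mul_apply, ← pow_succ, hpow]
      · rw [LinearMap.mem_ker, e_shift, LinearMap.mem_ker.mp hker, map_zero]
      · obtain ⟨c, rfl⟩ := hrange
        exact ⟨e c, e_shift c⟩
    obtain ⟨n, -, range_le⟩ :=
      exists_ker_le_ker_aeval_and_range_aeval_le_range_of_sl2 hhe hhf hef hf
    have mem_range_f : a ∈ LinearMap.range f := by
      apply range_le
      apply ker_aeval_inf_range_aeval_le_range_aeval_of_squarefree h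
        (squarefree_descPochhammer k n) (X - C μ)
      rw [map_sub, aeval_X, aeval_C]
      exact ⟨hker, hrange⟩
    exact Submodule.disjoint_def.mp (disjoint_ker_range_of_sl2 hhe hhf hef he hf) a ea_eq_zero
      mem_range_f

end Field

theorem stmt11_general {k : Type*} [Field k] [CharZero k] {L : Type*} [LieRing L]
    [LieAlgebra k L] {M N : Type*} [AddCommGroup M] [Module k M] [FiniteDimensional k M]
    [LieRingModule L M] [LieModule k L M] [AddCommGroup N] [Module k N] [LieRingModule L N]
    [LieModule k L N] {H x Y : L} (hHx : ⁅H, x⁆ = (2 : k) • x) (hHY : ⁅H, Y⁆ = (-2 : k) • Y)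
    (hxY : ⁅x, Y⁆ = H) {B : M →ₗ[k] N →ₗ[k] k} (hB : B.Nondegenerate)
    (hinv : ∀ m n, B ⁅H, m⁆ n + B m ⁅H, n⁆ = 0) (μ : k) :
    ∀ a ∈ (toEnd k L M H).eigenspace μ, a ≠ 0 →
      ∃ b ∈ (toEnd k L N H).eigenspace (-μ), B a b ≠ 0 := by
  set h := toEnd k L M H
  have hhe : ⁅h, toEnd k L M x⁆ = (2 : k) • toEnd k L M x := by
    rw [← LieHom.map_lie, hHx, map_smul]
  have hhf : ⁅h, toEnd k L M Y⁆ = (-2 : k) • toEnd k L M Y := by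
    rw [← LieHom.map_lie, hHY, map_smul]
  have hef : ⁅toEnd k L M x, toEnd k L M Y⁆ = h := by
    rw [← LieHom.map_lie, hxY]
  have disjoint := disjoint_ker_range_sub_algebraMap_of_sl2 hhe hhf hef
    (isNilpotent_of_lie_eq_smul two_ne_zero hhe)
    (isNilpotent_of_lie_eq_smul (neg_ne_zero.mpr two_ne_zero) hhf) μ
  have skew_adjoint (m : M) (n : N) : B ((h - algebraMap k _ μ) m) n +
      B m ((toEnd k L N H - algebraMap k _ (-μ)) n) = 0 := by
    simp only [LinearMap.sub_apply, Module.algebraMap_end_apply, LieModule.toEnd_apply_apply,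
      map_sub, map_smul, LinearMap.smul_apply, h, smul_eq_mul]
    linear_combination hinv m n
  simp only [Module.End.eigenspace_def]
  exact fun a ha ↦ exists_mem_ker_apply_ne_zero_of_disjoint hB skew_adjoint disjoint ha

end Sl2

theorem gwt_eq_eigenspace {k g : Type*} [Field k] [LieRing g] [LieAlgebra k g] (H : g) (i : ℤ) :
    gwt k H i = (toEnd k g g H).eigenspace (i : k) := by
  ext z
  rw [Module.End.mem_eigenspace_iff]
  rfl

/-- For a nondegenerate symmetric invariant bilinear form `B` on `g`, the
restriction of `B` gives a nondegenerate pairing between `g_i` and `g_{-i}`. -/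
theorem stmt11 {k : Type*} [Field k] [CharZero k]
    {g : Type*} [LieRing g] [LieAlgebra k g] [FiniteDimensional k g]
    (H x Y : g) (hHx : ⁅H, x⁆ = (2 : k) • x) (hHY : ⁅H, Y⁆ = (-2 : k) • Y)
    (hxY : ⁅x, Y⁆ = H)
    (B : g →ₗ[k] g →ₗ[k] k)
    (hsymm : ∀ a b : g, B a b = B b a)
    (hnondeg : ∀ a : g, (∀ b : g, B a b = 0) → a = 0)
    (hinv : ∀ z a b : g, B ⁅z, a⁆ b + B a ⁅z, b⁆ = 0) :
    ∀ i : ℤ, ∀ a ∈ gwt k H i, a ≠ 0 → ∃ b ∈ gwt k H (-i), B a b ≠ 0 := by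
  intro i
  simpa only [gwt_eq_eigenspace, Int.cast_neg] using stmt11_general hHx hHY hxY
    ⟨hnondeg, fun b hb ↦ hnondeg b fun a ↦ (hsymm b a).trans (hb a)⟩ (hinv H) (i : k)
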